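/- Let Z^{3⁸}(τ,z) = 2·(η(τ)⁶/η(3τ)²)·φ_{−2,1}(τ,z) be the twined elliptic genus for the M₂₄ class 3b. Then for all τ ∈ ℍ and z ∈ ℂ, the sum of the slashes of Z^{3⁸} by the matrices M_{1/3} = (1,0;3,1) and M_{2/3} = (−2,1;−3,1) (representing the two width-one cusps 1/3 and 2/3 of Γ₀(9)) equals −Z^{3⁸}: exp(−6πi z²/(3τ+1))·Z^{3⁸}( τ/(3τ+1), z/(3τ+1) ) + exp(6πi z²/(−3τ+1))·Z^{3⁸}( (−2τ+1)/(−3τ+1), z/(−3τ+1) ) = −Z^{3⁸}(τ,z). -/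

import Mathlib

open Complex


/-- The Dedekind eta function. -/
noncomputable def Eta (τ : ℂ) : ℂ :=
  Complex.exp (Real.pi * I * τ / 12) *
    ∏' n : ℕ, (1 - Complex.exp (2 * Real.pi * I * ((n : ℂ) + 1) * τ))

noncomputable def θ₁ (τ z : ℂ) : ℂ :=
  -I * ∑' n : ℤ, (-1 : ℂ) ^ n *
    Complex.exp (Real.pi * I * ((n : ℂ) + 1 / 2) ^ 2 * τ + (2 * (n : ℂ) + 1) * Real.pi * I * z)

noncomputable def θ₂ (τ z : ℂ) : ℂ :=
  ∑' n : ℤ,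
    Complex.exp (Real.pi * I * ((n : ℂ) + 1 / 2) ^ 2 * τ + (2 * (n : ℂ) + 1) * Real.pi * I * z)

noncomputable def θ₃ (τ z : ℂ) : ℂ :=
  ∑' n : ℤ, Complex.exp (Real.pi * I * (n : ℂ) ^ 2 * τ + 2 * (n : ℂ) * Real.pi * I * z)

noncomputable def θ₄ (τ z : ℂ) : ℂ :=
  ∑' n : ℤ, (-1 : ℂ) ^ n *
    Complex.exp (Real.pi * I * (n : ℂ) ^ 2 * τ + 2 * (n : ℂ) * Real.pi * I * z)

/-- The weak Jacobi form φ_{0,1}. -/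
noncomputable def φ01 (τ z : ℂ) : ℂ :=
  4 * ((θ₂ τ z / θ₂ τ 0) ^ 2 + (θ₃ τ z / θ₃ τ 0) ^ 2 + (θ₄ τ z / θ₄ τ 0) ^ 2)

/-- The weak Jacobi form φ_{−2,1}. -/
noncomputable def φm21 (τ z : ℂ) : ℂ := θ₁ τ z ^ 2 / Eta τ ^ 6

/-- Twined elliptic genus for the class 3b (cycle shape 3^8). -/
noncomputable def Z3b (τ z : ℂ) : ℂ :=
  2 * (Eta τ ^ 6 / Eta (3 * τ) ^ 2) * φm21 τ z

theorem Eta_eq_eta (τ : ℂ) : Eta τ = ModularForm.eta τ := by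
  simp only [Eta, ModularForm.eta, ModularForm.eta_q_eq_cexp, Function.Periodic.qParam]
  congr 2
  push_cast
  ring

theorem Eta_ne_zero {τ : ℂ} (hτ : 0 < τ.im) : Eta τ ≠ 0 := by
  rw [Eta_eq_eta]
  exact ModularForm.eta_ne_zero hτ

theorem ne_zero_of_im_pos {τ : ℂ} (hτ : 0 < τ.im) : τ ≠ 0 := by
  rintro rfl
  simp at hτ

theorem neg_one_div_im_pos {τ : ℂ} (hτ : 0 < τ.im) : 0 < (-1 / τ).im := by
  have h : 0 < normSq τ := normSq_pos.mpr (ne_zero_of_im_pos hτ)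
  rw [neg_div, one_div, neg_im, inv_im, neg_div, neg_neg]
  exact div_pos hτ h

theorem Eta_sq_neg_one_div {τ : ℂ} (hτ : 0 < τ.im) :
    Eta (-1 / τ) ^ 2 = -I * τ * Eta τ ^ 2 := by
  have h : ModularForm.eta (-1 / τ) = (sqrt I)⁻¹ * (sqrt τ * ModularForm.eta τ) :=
    ModularForm.eta_comp_eq_csqrt_I_inv hτ
  have hsq (w : ℂ) : sqrt w ^ 2 = w := by
    rw [sqrt]
    exact_mod_cast cpow_nat_inv_pow w two_ne_zero
  rw [Eta_eq_eta, Eta_eq_eta, h, mul_pow, mul_pow, inv_pow, hsq, hsq, inv_I, mul_assoc]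

theorem Eta_sq_add_int (τ : ℂ) (n : ℤ) :
    Eta (τ + n) ^ 2 = exp (Real.pi * I * n / 6) * Eta τ ^ 2 := by
  have hprod (m : ℕ) : exp (2 * Real.pi * I * ((m : ℂ) + 1) * (τ + n)) =
      exp (2 * Real.pi * I * ((m : ℂ) + 1) * τ) := by
    rw [exp_eq_exp_iff_exists_int]
    exact ⟨(m + 1) * n, by push_cast; ring⟩
  simp only [Eta, hprod, mul_pow]
  rw [← mul_assoc, ← exp_nat_mul, ← exp_nat_mul, ← exp_add]
  congr 2
  push_cast
  ring

theorem θ₁_add_int (τ z : ℂ) (n : ℤ) :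
    θ₁ (τ + n) z = exp (Real.pi * I * n / 4) * θ₁ τ z := by
  simp only [θ₁]
  rw [mul_left_comm, ← tsum_mul_left (a := exp _)]
  refine congrArg (-I * ·) (tsum_congr fun m ↦ ?_)
  rw [mul_left_comm, ← exp_add]
  congr 1
  rw [exp_eq_exp_iff_exists_int]
  obtain ⟨k, hk⟩ := Int.even_mul_succ_self m
  have hk' : (m : ℂ) * (m + 1) = k + k := by exact_mod_cast hk
  exact ⟨k * n, by push_cast; linear_combination Real.pi * I * n * hk'⟩

theorem θ₁_eq_jacobiTheta₂ (τ z : ℂ) :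
    θ₁ τ z = -I * (exp (Real.pi * I * (τ / 4 + z)) * jacobiTheta₂ (z + 1 / 2 + τ / 2) τ) := by
  rw [θ₁, jacobiTheta₂, ← tsum_mul_left (a := exp _)]
  refine congrArg (-I * ·) (tsum_congr fun n ↦ ?_)
  rw [jacobiTheta₂_term, ← exp_pi_mul_I, ← exp_int_mul, ← exp_add, ← exp_add]
  congr 1
  ring

theorem θ₁_sq_neg_one_div {τ : ℂ} (hτ : 0 < τ.im) (z : ℂ) :
    θ₁ (-1 / τ) (z / τ) ^ 2 = I * τ * exp (2 * Real.pi * I * z ^ 2 / τ) * θ₁ τ z ^ 2 := by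
  have h0 : τ ≠ 0 := ne_zero_of_im_pos hτ
  have hshift : jacobiTheta₂ (z / τ + 1 / 2 + -1 / τ / 2) (-1 / τ) =
      exp (-Real.pi * I * (2 * (z / τ) + 1)) *
        jacobiTheta₂ ((z + 1 / 2 + τ / 2) / τ) (-1 / τ) := by
    rw [show z / τ + 1 / 2 + -1 / τ / 2 = (z + 1 / 2 + τ / 2) / τ + -1 / τ by field_simp; ring,
      jacobiTheta₂_add_left']
    congr 3
    field_simp
    ring
  have hroot : ((-I * τ) ^ (1 / 2 : ℂ)) ^ 2 = -I * τ := by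
    rw [one_div]
    exact_mod_cast cpow_nat_inv_pow (-I * τ) two_ne_zero
  rw [θ₁_eq_jacobiTheta₂ (-1 / τ), θ₁_eq_jacobiTheta₂ τ, hshift,
    jacobiTheta₂_functional_equation _ τ]
  simp only [mul_pow, div_pow, hroot, ← exp_nat_mul]
  have hexp : exp ((2 : ℕ) * (Real.pi * I * (-1 / τ / 4 + z / τ))) *
      exp ((2 : ℕ) * (-Real.pi * I * (2 * (z / τ) + 1))) =
      exp (2 * Real.pi * I * z ^ 2 / τ) * exp ((2 : ℕ) * (Real.pi * I * (τ / 4 + z))) *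
        exp ((2 : ℕ) * (-Real.pi * I * (z + 1 / 2 + τ / 2) ^ 2 / τ)) * exp (Real.pi * I) := by
    simp only [← exp_add]
    rw [exp_eq_exp_iff_exists_int]
    refine ⟨-1, ?_⟩
    field_simp
    push_cast
    ring
  rw [exp_pi_mul_I] at hexp
  have hI : I * τ * (1 / (-I * τ)) = -1 := by
    field_simp
  linear_combination (-I) ^ 2 * jacobiTheta₂ ((z + 1 / 2 + τ / 2) / τ) (-1 / τ) ^ 2 * hexp -
    (-I) ^ 2 * jacobiTheta₂ ((z + 1 / 2 + τ / 2) / τ) (-1 / τ) ^ 2 *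
      exp (2 * Real.pi * I * z ^ 2 / τ) * exp ((2 : ℕ) * (Real.pi * I * (τ / 4 + z))) *
        exp ((2 : ℕ) * (-Real.pi * I * (z + 1 / 2 + τ / 2) ^ 2 / τ)) * hI

theorem θ₁_sq_neg {τ : ℂ} (hτ : 0 < τ.im) (z : ℂ) : θ₁ τ (-z) ^ 2 = θ₁ τ z ^ 2 := by
  have h0 : τ ≠ 0 := ne_zero_of_im_pos hτ
  have h := θ₁_sq_neg_one_div (neg_one_div_im_pos hτ) (z / τ)
  rw [θ₁_sq_neg_one_div hτ, show -1 / (-1 / τ) = τ by field_simp,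
    show z / τ / (-1 / τ) = -z by field_simp,
    show 2 * Real.pi * I * (z / τ) ^ 2 / (-1 / τ) = -(2 * Real.pi * I * z ^ 2 / τ) by field_simp,
    exp_neg] at h
  rw [h]
  field_simp
  simp

theorem one_sub_int_mul_ne_zero {τ : ℂ} (hτ : 0 < τ.im) (n : ℤ) : 1 - n * τ ≠ 0 := by
  intro h
  have him := congrArg im h
  simp only [sub_im, one_im, mul_im, intCast_re, intCast_im, zero_mul, add_zero, zero_im,
    zero_sub, neg_eq_zero, mul_eq_zero, hτ.ne', or_false] at him
  have hn : (n : ℂ) = 0 := by exact_mod_cast him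
  simp [hn] at h

theorem Eta_sq_lower_unipotent {τ : ℂ} (hτ : 0 < τ.im) (n : ℤ) :
    Eta (τ / (1 - n * τ)) ^ 2 = (1 - n * τ) * exp (Real.pi * I * n / 6) * Eta τ ^ 2 := by
  have h0 : τ ≠ 0 := ne_zero_of_im_pos hτ
  have hd := one_sub_int_mul_ne_zero hτ n
  have him : 0 < (-1 / τ + n).im := by simpa using neg_one_div_im_pos hτ
  have hinv : τ / (1 - n * τ) = -1 / (-1 / τ + n) := by
    rw [div_eq_div_iff hd (ne_zero_of_im_pos him)]
    field_simp
    ring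
  rw [hinv, Eta_sq_neg_one_div him, Eta_sq_add_int, Eta_sq_neg_one_div hτ]
  field_simp
  linear_combination (-1 + n * τ) * Eta τ ^ 2 * I_sq

theorem θ₁_sq_lower_unipotent {τ : ℂ} (hτ : 0 < τ.im) (z : ℂ) (n : ℤ) :
    exp (2 * Real.pi * I * n * z ^ 2 / (1 - n * τ)) *
        θ₁ (τ / (1 - n * τ)) (z / (1 - n * τ)) ^ 2 =
      (1 - n * τ) * exp (Real.pi * I * n / 2) * θ₁ τ z ^ 2 := by
  have h0 : τ ≠ 0 := ne_zero_of_im_pos hτ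
  have hd := one_sub_int_mul_ne_zero hτ n
  have him : 0 < (-1 / τ + n).im := by simpa using neg_one_div_im_pos hτ
  have hw : -1 / τ + n = -(1 - n * τ) / τ := by
    field_simp
    ring
  have hinv : τ / (1 - n * τ) = -1 / (-1 / τ + n) := by
    rw [hw]
    field_simp
  have hz : z / (1 - n * τ) = -(z / τ) / (-1 / τ + n) := by
    rw [hw]
    field_simp
  rw [hinv, hz, θ₁_sq_neg_one_div him, θ₁_sq_neg him, θ₁_add_int, mul_pow, ← exp_nat_mul,
    θ₁_sq_neg_one_div hτ]
  have hexp : exp (2 * Real.pi * I * n * z ^ 2 / (1 - n * τ)) *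
      exp (2 * Real.pi * I * (-(z / τ)) ^ 2 / (-1 / τ + n)) *
      exp (2 * Real.pi * I * z ^ 2 / τ) = 1 := by
    rw [← exp_add, ← exp_add, hw, exp_eq_one_iff]
    refine ⟨0, ?_⟩
    field_simp
    ring
  have hhalf : exp ((2 : ℕ) * (Real.pi * I * n / 4)) = exp (Real.pi * I * n / 2) := by
    congr 1
    push_cast
    ring
  have hcoef : I * (-1 / τ + n) * (I * τ) = 1 - n * τ := by
    field_simp
    linear_combination (-1 + n * τ) * I_sq
  rw [hhalf]
  linear_combination (1 - n * τ) * exp (Real.pi * I * n / 2) * θ₁ τ z ^ 2 * hexp +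
    exp (2 * Real.pi * I * n * z ^ 2 / (1 - n * τ)) *
      exp (2 * Real.pi * I * (-(z / τ)) ^ 2 / (-1 / τ + n)) *
      exp (2 * Real.pi * I * z ^ 2 / τ) * exp (Real.pi * I * n / 2) * θ₁ τ z ^ 2 * hcoef

theorem lower_unipotent_im_pos {τ : ℂ} (hτ : 0 < τ.im) (n : ℤ) :
    0 < (τ / (1 - n * τ)).im := by
  have him : 0 < (-1 / τ + n).im := by simpa using neg_one_div_im_pos hτ
  have h0 : τ ≠ 0 := ne_zero_of_im_pos hτ
  have hd := one_sub_int_mul_ne_zero hτ n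
  convert neg_one_div_im_pos him using 2
  rw [div_eq_div_iff hd (ne_zero_of_im_pos him)]
  field_simp
  ring

theorem Z3b_eq {τ : ℂ} (hτ : 0 < τ.im) (z : ℂ) :
    Z3b τ z = 2 * θ₁ τ z ^ 2 / Eta (3 * τ) ^ 2 := by
  have h := Eta_ne_zero hτ
  rw [Z3b, φm21]
  field_simp

theorem exp_four_pi_div_three_add_exp_neg :
    exp (4 * Real.pi * I / 3) + exp (-(4 * Real.pi * I / 3)) = -1 := by
  have h := two_cos (4 * Real.pi / 3 : ℂ)
  have hcos : Complex.cos (4 * Real.pi / 3 : ℂ) = -1 / 2 := by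
    rw [show (4 * Real.pi / 3 : ℂ) = ((Real.pi / 3 + Real.pi : ℝ) : ℂ) by push_cast; ring,
      ← ofReal_cos, Real.cos_add_pi, Real.cos_pi_div_three]
    push_cast
    ring
  rw [hcos] at h
  rw [show 4 * Real.pi * I / 3 = 4 * Real.pi / 3 * I by ring, ← neg_mul, ← h]
  ring

/-- The slash by `(1, 0; 3, 1)` multiplies `Z3b` by a primitive cube root of unity. -/
theorem Z3b_slash_one_third {τ : ℂ} (hτ : 0 < τ.im) (z : ℂ) :
    exp (-6 * Real.pi * I * z ^ 2 / (3 * τ + 1)) * Z3b (τ / (3 * τ + 1)) (z / (3 * τ + 1)) =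
      exp (-(4 * Real.pi * I / 3)) * Z3b τ z := by
  have h3 : 0 < (3 * τ).im := by simpa using hτ
  have hη := Eta_ne_zero h3
  have hd := one_sub_int_mul_ne_zero hτ (-3)
  have hθ := θ₁_sq_lower_unipotent hτ z (-3)
  have hE := Eta_sq_lower_unipotent h3 (-1)
  have hpos := lower_unipotent_im_pos hτ (-3)
  rw [show 1 - ((-3 : ℤ) : ℂ) * τ = 3 * τ + 1 by push_cast; ring] at hd hθ hpos
  rw [show 1 - ((-1 : ℤ) : ℂ) * (3 * τ) = 3 * τ + 1 by push_cast; ring] at hE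
  rw [show 2 * Real.pi * I * ((-3 : ℤ) : ℂ) * z ^ 2 / (3 * τ + 1) =
    -6 * Real.pi * I * z ^ 2 / (3 * τ + 1) by push_cast; ring] at hθ
  have hroot : exp (Real.pi * I * ((-3 : ℤ) : ℂ) / 2) =
      exp (-(4 * Real.pi * I / 3)) * exp (Real.pi * I * ((-1 : ℤ) : ℂ) / 6) := by
    rw [← exp_add]
    congr 1
    push_cast
    ring
  rw [Z3b_eq hpos, Z3b_eq hτ, ← mul_div_assoc, ← mul_div_assoc 3, hE, ← mul_div_assoc,
    mul_left_comm, hθ, hroot]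
  field_simp

/-- The slash by `(-2, 1; -3, 1)` multiplies `Z3b` by the conjugate cube root of unity. -/
theorem Z3b_slash_two_thirds {τ : ℂ} (hτ : 0 < τ.im) (z : ℂ) :
    exp (6 * Real.pi * I * z ^ 2 / (-3 * τ + 1)) *
        Z3b ((-2 * τ + 1) / (-3 * τ + 1)) (z / (-3 * τ + 1)) =
      exp (4 * Real.pi * I / 3) * Z3b τ z := by
  have h3 : 0 < (3 * τ).im := by simpa using hτ
  have hη := Eta_ne_zero h3
  have hd := one_sub_int_mul_ne_zero hτ 3
  have hθ := θ₁_sq_lower_unipotent hτ z 3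
  have hE := Eta_sq_lower_unipotent h3 1
  have hpos := lower_unipotent_im_pos hτ 3
  rw [show 1 - ((3 : ℤ) : ℂ) * τ = -3 * τ + 1 by push_cast; ring] at hd hθ hpos
  rw [show 1 - ((1 : ℤ) : ℂ) * (3 * τ) = -3 * τ + 1 by push_cast; ring] at hE
  rw [show 2 * Real.pi * I * ((3 : ℤ) : ℂ) * z ^ 2 / (-3 * τ + 1) =
    6 * Real.pi * I * z ^ 2 / (-3 * τ + 1) by push_cast; ring] at hθ
  have hT : (-2 * τ + 1) / (-3 * τ + 1) = τ / (-3 * τ + 1) + (1 : ℤ) := by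
    rw [div_add' _ _ _ hd]
    push_cast
    ring
  have hT3 : 3 * (τ / (-3 * τ + 1) + (1 : ℤ)) = 3 * τ / (-3 * τ + 1) + (3 : ℤ) := by
    push_cast
    ring
  have hpos' : 0 < (τ / (-3 * τ + 1) + (1 : ℤ)).im := by simpa using hpos
  have hroot : exp ((2 : ℕ) * (Real.pi * I * ((1 : ℤ) : ℂ) / 4)) =
      exp (4 * Real.pi * I / 3) * exp (Real.pi * I * ((1 : ℤ) : ℂ) / 6) *
        exp (Real.pi * I * ((3 : ℤ) : ℂ) / 6) / exp (Real.pi * I * ((3 : ℤ) : ℂ) / 2) := by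
    rw [← exp_add, ← exp_add, ← exp_sub]
    congr 1
    push_cast
    ring
  rw [hT, Z3b_eq hpos', Z3b_eq hτ, hT3, Eta_sq_add_int, hE, θ₁_add_int, mul_pow, ← exp_nat_mul,
    hroot, ← mul_div_assoc, mul_left_comm, mul_left_comm (exp (6 * _ * _ * _ / _)), hθ]
  field_simp
  exact mul_div_cancel_left₀ _ (by rwa [← neg_mul])

/-- The sum of the slashes of Z^{3⁸} by M_{1/3} = (1,0;3,1) and M_{2/3} = (−2,1;−3,1)
equals −Z^{3⁸}. -/
theorem Z3b_slash_cusps (τ : ℂ) (hτ : 0 < τ.im) (z : ℂ) :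
    Complex.exp (-6 * Real.pi * I * z ^ 2 / (3 * τ + 1)) *
          Z3b (τ / (3 * τ + 1)) (z / (3 * τ + 1)) +
        Complex.exp (6 * Real.pi * I * z ^ 2 / (-3 * τ + 1)) *
          Z3b ((-2 * τ + 1) / (-3 * τ + 1)) (z / (-3 * τ + 1)) =
      -Z3b τ z := by
  rw [Z3b_slash_one_third hτ, Z3b_slash_two_thirds hτ]
  linear_combination Z3b τ z * exp_four_pi_div_three_add_exp_neg
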